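/- Let μ^a, μ^b ∈ [0,1]^m with OptEnvy ≤ −Δ for some Δ > 0, let q ≥ 1 satisfy q ≤ (1/2) m³/Δ², and for c > 0 define z_i(c) = √(q/(m(1+c²))) · (c μ^a_i − μ^b_i). Then for all c > 0: ∑_{i=1}^m (1 − 2Q(z_i(c))) · z_i(c) ≥ 0.21 · (q/m²) · ((1+c)²/(1+c²)) · Δ². -/

import Mathlib

open MeasureTheory Real
open scoped Classical

noncomputable section

def envyAB {m : ℕ} (μa : Fin m → ℝ) (A : Finset (Fin m)) : ℝ :=
  ∑ i ∈ Aᶜ, μa i - ∑ i ∈ A, μa i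

def envyBA {m : ℕ} (μb : Fin m → ℝ) (A : Finset (Fin m)) : ℝ :=
  ∑ i ∈ A, μb i - ∑ i ∈ Aᶜ, μb i

def envy {m : ℕ} (μa μb : Fin m → ℝ) (A : Finset (Fin m)) : ℝ :=
  max (envyAB μa A) (envyBA μb A)

def optEnvy {m : ℕ} (μa μb : Fin m → ℝ) : ℝ :=
  ⨅ A : Finset (Fin m), envy μa μb A

/-- The standard Gaussian upper-tail function `Q(z) = (1/√(2π)) ∫_z^∞ e^{−x²/2} dx`. -/
def gaussQ (z : ℝ) : ℝ := (1 / Real.sqrt (2 * Real.pi)) * ∫ x in Set.Ioi z, Real.exp (-x ^ 2 / 2)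

/-!
Write `F z = (1 - 2 Q(z)) z`. It is even, and `F z ≥ 0.42 min(|z|, 1) |z|` because the Gaussian density
is at least `exp (-1/2) / √(2π)` on `[0, 1]`. For every `t ≤ 1` this yields the tangent-line bound
`F z ≥ 0.21 (2 t |z| - t²)`, which can be summed: `m` numbers with average modulus at least
`t ∈ [0, 1]` satisfy `∑ F zᵢ ≥ 0.21 m t²`. On the other hand, splitting `∑ |c μᵃᵢ - μᵇᵢ|` along an
allocation of minimal envy bounds it from below by `(1 + c) Δ`, so the average modulus of the
`zᵢ(c)` is at least `t = √(q / (m (1 + c²))) (1 + c) Δ / m`. The condition on `q` and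
`(1 + c)² ≤ 2 (1 + c²)` give `t ≤ 1`.
-/

theorem integrable_exp_neg_sq_div_two : Integrable fun x : ℝ => exp (-x ^ 2 / 2) := by
  convert integrable_exp_neg_mul_sq (b := 1 / 2) (by norm_num) using 3
  ring

theorem integral_exp_neg_sq_div_two : ∫ x : ℝ, exp (-x ^ 2 / 2) = √(2 * π) := by
  convert integral_gaussian (1 / 2) using 2
  · ext x
    ring_nf
  · ring

theorem gaussQ_neg (z : ℝ) : gaussQ (-z) = 1 - gaussQ z := by
  have reflect : ∫ x in Set.Ioi (-z), exp (-x ^ 2 / 2) = ∫ x in Set.Iic z, exp (-x ^ 2 / 2) := by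
    rw [← integral_comp_neg_Iic]
    simp only [neg_sq]
  have total : (∫ x in Set.Iic z, exp (-x ^ 2 / 2)) + ∫ x in Set.Ioi z, exp (-x ^ 2 / 2) =
      √(2 * π) := by
    rw [intervalIntegral.integral_Iic_add_Ioi integrable_exp_neg_sq_div_two.integrableOn
      integrable_exp_neg_sq_div_two.integrableOn, integral_exp_neg_sq_div_two]
  have sqrt_ne_zero : √(2 * π) ≠ 0 := by positivity
  rw [gaussQ, gaussQ, reflect, eq_sub_iff_add_eq, ← mul_add, total, one_div_mul_cancel sqrt_ne_zero]

theorem gaussQ_zero : gaussQ 0 = 1 / 2 := by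
  have h := gaussQ_neg 0
  rw [neg_zero] at h
  linarith

theorem gaussQ_sub_gaussQ (a b : ℝ) :
    gaussQ a - gaussQ b = 1 / √(2 * π) * ∫ x in a..b, exp (-x ^ 2 / 2) := by
  rw [gaussQ, gaussQ, ← mul_sub, intervalIntegral.integral_Ioi_sub_Ioi'
    integrable_exp_neg_sq_div_two.integrableOn integrable_exp_neg_sq_div_two.integrableOn]

theorem antitone_gaussQ : Antitone gaussQ := by
  intro a b hab
  rw [← sub_nonneg, gaussQ_sub_gaussQ]
  have : 0 ≤ ∫ x in a..b, exp (-x ^ 2 / 2) :=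
    intervalIntegral.integral_nonneg hab fun x _ => (exp_pos _).le
  positivity

theorem one_sub_two_mul_gaussQ (z : ℝ) :
    1 - 2 * gaussQ z = 2 / √(2 * π) * ∫ x in (0 : ℝ)..z, exp (-x ^ 2 / 2) := by
  calc 1 - 2 * gaussQ z = 2 * (gaussQ 0 - gaussQ z) := by rw [gaussQ_zero]; ring
    _ = 2 / √(2 * π) * ∫ x in (0 : ℝ)..z, exp (-x ^ 2 / 2) := by rw [gaussQ_sub_gaussQ]; ring

theorem one_sub_two_mul_gaussQ_abs_mul_abs (z : ℝ) :
    (1 - 2 * gaussQ |z|) * |z| = (1 - 2 * gaussQ z) * z := by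
  rcases abs_choice z with h | h <;> rw [h]
  rw [gaussQ_neg]
  ring

theorem exp_neg_sq_div_two_ge {x : ℝ} (hx : |x| ≤ 1) : 0.6 ≤ exp (-x ^ 2 / 2) := by
  calc (0.6 : ℝ) ≤ √(exp (-1)) := le_sqrt_of_sq_le (by linarith [exp_neg_one_gt_d9])
    _ = exp (-1 / 2) := (exp_half _).symm
    _ ≤ exp (-x ^ 2 / 2) := by
      gcongr
      exact (sq_le_one_iff_abs_le_one x).mpr hx

theorem two_div_sqrt_two_mul_pi_ge : 0.7 ≤ 2 / √(2 * π) := by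
  have sqrt_le : √(2 * π) ≤ 2.6 := sqrt_le_iff.mpr ⟨by norm_num, by linarith [pi_lt_d2]⟩
  rw [le_div_iff₀ (by positivity)]
  linarith

theorem mul_le_one_sub_two_mul_gaussQ {z : ℝ} (hz₀ : 0 ≤ z) (hz₁ : z ≤ 1) :
    0.42 * z ≤ 1 - 2 * gaussQ z := by
  have integral_ge : 0.6 * z ≤ ∫ x in (0 : ℝ)..z, exp (-x ^ 2 / 2) := by
    calc 0.6 * z = ∫ _ in (0 : ℝ)..z, (0.6 : ℝ) := by
          rw [intervalIntegral.integral_const, smul_eq_mul, sub_zero, mul_comm]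
      _ ≤ _ := intervalIntegral.integral_mono_on hz₀ intervalIntegrable_const
          integrable_exp_neg_sq_div_two.intervalIntegrable fun x hx =>
            exp_neg_sq_div_two_ge (abs_le.mpr ⟨by linarith [hx.1], hx.2.trans hz₁⟩)
  calc 0.42 * z = 0.7 * (0.6 * z) := by ring
    _ ≤ 2 / √(2 * π) * ∫ x in (0 : ℝ)..z, exp (-x ^ 2 / 2) :=
      mul_le_mul two_div_sqrt_two_mul_pi_ge integral_ge (by positivity) (by positivity)
    _ = 1 - 2 * gaussQ z := (one_sub_two_mul_gaussQ z).symm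

theorem mul_min_one_le_one_sub_two_mul_gaussQ {z : ℝ} (hz : 0 ≤ z) :
    0.42 * min z 1 ≤ 1 - 2 * gaussQ z := by
  calc 0.42 * min z 1 ≤ 1 - 2 * gaussQ (min z 1) :=
        mul_le_one_sub_two_mul_gaussQ (le_min hz zero_le_one) (min_le_right z 1)
    _ ≤ 1 - 2 * gaussQ z := by linarith [antitone_gaussQ (min_le_left z 1)]

theorem two_mul_mul_sub_sq_le_two_mul_min_one_mul {x t : ℝ} (hx : 0 ≤ x) (ht : t ≤ 1) :
    2 * t * x - t ^ 2 ≤ 2 * (min x 1 * x) := by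
  rcases le_total x 1 with hx₁ | hx₁
  · rw [min_eq_left hx₁]
    nlinarith [sq_nonneg (x - t), sq_nonneg x]
  · rw [min_eq_right hx₁]
    nlinarith [mul_le_mul_of_nonneg_right ht hx, sq_nonneg t]

theorem two_mul_mul_abs_sub_sq_le_one_sub_two_mul_gaussQ_mul (z : ℝ) {t : ℝ} (ht : t ≤ 1) :
    0.21 * (2 * t * |z| - t ^ 2) ≤ (1 - 2 * gaussQ z) * z := by
  calc 0.21 * (2 * t * |z| - t ^ 2) ≤ 0.21 * (2 * (min |z| 1 * |z|)) := by
        gcongr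
        exact two_mul_mul_sub_sq_le_two_mul_min_one_mul (abs_nonneg z) ht
    _ = 0.42 * min |z| 1 * |z| := by ring
    _ ≤ (1 - 2 * gaussQ |z|) * |z| := by
        gcongr
        exact mul_min_one_le_one_sub_two_mul_gaussQ (abs_nonneg z)
    _ = (1 - 2 * gaussQ z) * z := one_sub_two_mul_gaussQ_abs_mul_abs z

theorem card_mul_sq_le_sum_one_sub_two_mul_gaussQ_mul {ι : Type*} (s : Finset ι) (z : ι → ℝ)
    {t : ℝ} (ht₀ : 0 ≤ t) (ht₁ : t ≤ 1) (hz : s.card * t ≤ ∑ i ∈ s, |z i|) :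
    0.21 * (s.card * t ^ 2) ≤ ∑ i ∈ s, (1 - 2 * gaussQ (z i)) * z i := by
  calc 0.21 * (s.card * t ^ 2) = 0.21 * (2 * t * (s.card * t) - s.card * t ^ 2) := by ring
    _ ≤ 0.21 * (2 * t * ∑ i ∈ s, |z i| - s.card * t ^ 2) := by gcongr
    _ = ∑ i ∈ s, 0.21 * (2 * t * |z i| - t ^ 2) := by
        rw [← Finset.mul_sum, Finset.sum_sub_distrib, ← Finset.mul_sum, Finset.sum_const,
          nsmul_eq_mul]
    _ ≤ ∑ i ∈ s, (1 - 2 * gaussQ (z i)) * z i := Finset.sum_le_sum fun i _ =>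
        two_mul_mul_abs_sub_sq_le_one_sub_two_mul_gaussQ_mul (z i) ht₁

section Envy

variable {m : ℕ} (μa μb : Fin m → ℝ)

theorem exists_envy_eq_optEnvy : ∃ A, envy μa μb A = optEnvy μa μb :=
  exists_eq_ciInf_of_finite

theorem neg_mul_envyAB_add_envyBA_le_sum_abs (A : Finset (Fin m)) (c : ℝ) :
    -(c * envyAB μa A + envyBA μb A) ≤ ∑ i, |c * μa i - μb i| := by
  calc -(c * envyAB μa A + envyBA μb A)
      = ∑ i ∈ A, (c * μa i - μb i) + ∑ i ∈ Aᶜ, -(c * μa i - μb i) := by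
        simp only [envyAB, envyBA, Finset.sum_neg_distrib, Finset.sum_sub_distrib,
          ← Finset.mul_sum]
        ring
    _ ≤ ∑ i ∈ A, |c * μa i - μb i| + ∑ i ∈ Aᶜ, |c * μa i - μb i| :=
        add_le_add (Finset.sum_le_sum fun _ _ => le_abs_self _)
          (Finset.sum_le_sum fun _ _ => neg_le_abs _)
    _ = ∑ i, |c * μa i - μb i| := Finset.sum_add_sum_compl A _

theorem one_add_mul_neg_optEnvy_le_sum_abs {c : ℝ} (hc : 0 ≤ c) :
    (1 + c) * -optEnvy μa μb ≤ ∑ i, |c * μa i - μb i| := by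
  obtain ⟨A, hA⟩ := exists_envy_eq_optEnvy μa μb
  have envyAB_le : envyAB μa A ≤ optEnvy μa μb := hA ▸ le_max_left _ _
  have envyBA_le : envyBA μb A ≤ optEnvy μa μb := hA ▸ le_max_right _ _
  linarith [neg_mul_envyAB_add_envyBA_le_sum_abs μa μb A c,
    mul_le_mul_of_nonneg_left envyAB_le hc]

end Envy

theorem one_add_sq_div_one_add_sq_le_two (c : ℝ) : (1 + c) ^ 2 / (1 + c ^ 2) ≤ 2 := by
  rw [div_le_iff₀ (by positivity)]
  simpa only [one_pow] using add_sq_le (a := 1) (b := c)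

/-- The lower bound `√(q / (m (1 + c²))) (1 + c) Δ / m` for the average of the moduli `|z_i(c)|` of
`m` items when the optimal envy is at most `-Δ`. -/
def meanAbsBound (m : ℕ) (Δ q c : ℝ) : ℝ :=
  √(q / (m * (1 + c ^ 2))) * ((1 + c) * Δ) / m

theorem meanAbsBound_nonneg (m : ℕ) {Δ : ℝ} (hΔ : 0 ≤ Δ) (q : ℝ) {c : ℝ} (hc : 0 ≤ c) :
    0 ≤ meanAbsBound m Δ q c := by
  unfold meanAbsBound
  positivity

theorem meanAbsBound_sq (m : ℕ) (Δ : ℝ) {q : ℝ} (hq : 0 ≤ q) (c : ℝ) :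
    meanAbsBound m Δ q c ^ 2 = q / m ^ 3 * Δ ^ 2 * ((1 + c) ^ 2 / (1 + c ^ 2)) := by
  rw [meanAbsBound, div_pow, mul_pow, sq_sqrt (by positivity)]
  field_simp

theorem meanAbsBound_le_one {m : ℕ} (hm : 0 < m) {Δ : ℝ} (hΔ : 0 < Δ) {q : ℝ} (hq₀ : 0 ≤ q)
    (hq : q ≤ 1 / 2 * m ^ 3 / Δ ^ 2) (c : ℝ) : meanAbsBound m Δ q c ≤ 1 := by
  have scaled_q_le : q / m ^ 3 * Δ ^ 2 ≤ 1 / 2 := by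
    rwa [div_mul_eq_mul_div, div_le_iff₀ (by positivity), ← le_div_iff₀ (by positivity)]
  have sq_le_one : meanAbsBound m Δ q c ^ 2 ≤ 1 := by
    calc meanAbsBound m Δ q c ^ 2 = q / m ^ 3 * Δ ^ 2 * ((1 + c) ^ 2 / (1 + c ^ 2)) :=
          meanAbsBound_sq m Δ hq₀ c
      _ ≤ 1 / 2 * 2 :=
          mul_le_mul scaled_q_le (one_add_sq_div_one_add_sq_le_two c) (by positivity) (by norm_num)
      _ = 1 := by norm_num
  exact (abs_le.mp ((sq_le_one_iff_abs_le_one _).mp sq_le_one)).2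

theorem mul_meanAbsBound_le_sum_abs {m : ℕ} (hm : 0 < m) (μa μb : Fin m → ℝ) {Δ : ℝ}
    (hopt : optEnvy μa μb ≤ -Δ) (q : ℝ) {c : ℝ} (hc : 0 ≤ c) :
    m * meanAbsBound m Δ q c ≤ ∑ i, |√(q / (m * (1 + c ^ 2))) * (c * μa i - μb i)| := by
  calc m * meanAbsBound m Δ q c = √(q / (m * (1 + c ^ 2))) * ((1 + c) * Δ) :=
        mul_div_cancel₀ _ (by positivity)
    _ ≤ √(q / (m * (1 + c ^ 2))) * ((1 + c) * -optEnvy μa μb) := by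
        gcongr
        exact le_neg_of_le_neg hopt
    _ ≤ √(q / (m * (1 + c ^ 2))) * ∑ i, |c * μa i - μb i| := by
        gcongr
        exact one_add_mul_neg_optEnvy_le_sum_abs μa μb hc
    _ = ∑ i, |√(q / (m * (1 + c ^ 2))) * (c * μa i - μb i)| := by
        simp only [abs_mul, abs_of_nonneg (sqrt_nonneg _), Finset.mul_sum]

theorem stmt6_general {m : ℕ} (μa μb : Fin m → ℝ) {Δ : ℝ} (hΔ : 0 < Δ)
    (hopt : optEnvy μa μb ≤ -Δ) {q : ℝ} (hq₀ : 0 < q) (hq : q ≤ 1 / 2 * m ^ 3 / Δ ^ 2)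
    {c : ℝ} (hc : 0 ≤ c) :
    0.21 * (q / m ^ 2) * ((1 + c) ^ 2 / (1 + c ^ 2)) * Δ ^ 2 ≤
      ∑ i, (1 - 2 * gaussQ (√(q / (m * (1 + c ^ 2))) * (c * μa i - μb i))) *
        (√(q / (m * (1 + c ^ 2))) * (c * μa i - μb i)) := by
  have hm : 0 < m := by
    rw [Nat.pos_iff_ne_zero]
    rintro rfl
    norm_num at hq
    linarith
  calc 0.21 * (q / m ^ 2) * ((1 + c) ^ 2 / (1 + c ^ 2)) * Δ ^ 2
      = 0.21 * (m * meanAbsBound m Δ q c ^ 2) := by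
        rw [meanAbsBound_sq m Δ hq₀.le]
        field_simp
    _ ≤ _ := by
        simpa only [Finset.card_fin] using
          card_mul_sq_le_sum_one_sub_two_mul_gaussQ_mul Finset.univ
            (fun i => √(q / (m * (1 + c ^ 2))) * (c * μa i - μb i))
            (meanAbsBound_nonneg m hΔ.le q hc) (meanAbsBound_le_one hm hΔ hq₀.le hq c)
            (by simpa only [Finset.card_fin] using mul_meanAbsBound_le_sum_abs hm μa μb hopt q hc)

/-- with `z_i(c) = √(q/(m(1+c²))) (c μ^a_i − μ^b_i)`, if `OptEnvy ≤ -Δ` and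
`q ≤ (1/2) m³/Δ²` then `∑ i (1 − 2Q(z_i(c))) z_i(c) ≥ 0.21 (q/m²) ((1+c)²/(1+c²)) Δ²`. -/
theorem stmt6 {m : ℕ} (μa μb : Fin m → ℝ)
    (hμa : ∀ i, μa i ∈ Set.Icc (0 : ℝ) 1) (hμb : ∀ i, μb i ∈ Set.Icc (0 : ℝ) 1)
    (Δ : ℝ) (hΔ : 0 < Δ) (hopt : optEnvy μa μb ≤ -Δ)
    (q : ℕ) (hq1 : 1 ≤ q) (hq2 : (q : ℝ) ≤ 1 / 2 * m ^ 3 / Δ ^ 2)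
    (c : ℝ) (hc : 0 < c) :
    0.21 * ((q : ℝ) / m ^ 2) * ((1 + c) ^ 2 / (1 + c ^ 2)) * Δ ^ 2 ≤
      ∑ i, (1 - 2 * gaussQ (Real.sqrt ((q : ℝ) / (m * (1 + c ^ 2))) * (c * μa i - μb i))) *
        (Real.sqrt ((q : ℝ) / (m * (1 + c ^ 2))) * (c * μa i - μb i)) :=
  stmt6_general μa μb hΔ hopt (mod_cast hq1) hq2 hc.le
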